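/- Let K be a number field with [K : ℚ] = 2 whose discriminant d = disc(K) satisfies d < −4 (so K is an imaginary quadratic field). Then the class number h_K of K satisfies h_K ≤ (e/(2π))·√|d|·log|d|, as real numbers. -/

import Mathlib

/-! A rational prime `p` has at most `[K : ℚ]` primes above it, so the primes of `𝓞 K` can be
coloured with `[K : ℚ]` colours in such a way that primes above the same `p` get different colours.
An ideal is then determined by the norms of its `[K : ℚ]` monochromatic parts, whose product is its
norm. Hence there are at most as many ideals of norm `n` as ordered factorizations of `n` into
`[K : ℚ]` factors, and Minkowski's theorem bounds the class number by the number of these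
factorizations over all `n` up to the Minkowski bound. In degree `2` the Minkowski bound is at most
`x = (2 / π) √|d|`, and the sum becomes `∑ σ₀(n) = ∑ ⌊⌊x⌋ / a⌋ ≤ x (1 + log x)`. The claimed bound
is `(e / 2) x log (π x / 2)`, which is larger when `x ≥ 3`; for `1 ≤ x < 3` the sum is `1` or `3`.
-/

section Coloring

open Ideal Module

variable (R S : Type*) [CommRing R] [IsDomain R] [CommRing S] [Algebra R S] [Module.Finite R S]
  [Flat R S]

theorem encard_primesOver_le_finrank (p : Ideal R) [p.IsPrime] :
    (p.primesOver S).encard ≤ finrank R S := by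
  have := (Algebra.QuasiFinite.finite_primesOver (S := S) p).fintype
  rw [← sum_ramification_inertia_eq_finrank p S, ← Set.coe_fintypeCard, Nat.cast_le,
    Fintype.card_eq_sum_ones]
  exact Finset.sum_le_sum fun P _ ↦
    Nat.mul_pos (ramificationIdx_pos P.1 R) (inertiaDeg_pos P.1 R)

theorem exists_injOn_primesOver [Nontrivial S] :
    ∃ c : Ideal S → Fin (finrank R S), ∀ p : Ideal R, p.IsPrime → (p.primesOver S).InjOn c := by
  have : Nonempty (Fin (finrank R S)) := ⟨0, finrank_pos⟩
  have hlocal (p : Ideal R) :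
      ∃ c : Ideal S → Fin (finrank R S), p.IsPrime → (p.primesOver S).InjOn c := by
    by_cases hp : p.IsPrime
    · obtain ⟨c, -, hc⟩ := (Algebra.QuasiFinite.finite_primesOver p).exists_injOn_of_encard_le
        (t := (Set.univ : Set (Fin (finrank R S))))
        (by simpa using encard_primesOver_le_finrank R S p)
      exact ⟨c, fun _ ↦ hc⟩
    · exact ⟨fun _ ↦ Classical.arbitrary _, fun hp' ↦ absurd hp' hp⟩
  choose c hc using hlocal
  refine ⟨fun P ↦ c (P.under R) P, fun p hp P hP Q hQ h ↦ hc p hp hP hQ ?_⟩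
  dsimp only at h
  rwa [← hP.2.over, ← hQ.2.over] at h

end Coloring

section ColorNorm

open Ideal Module UniqueFactorizationMonoid

variable {S ι : Type*} [CommRing S] [IsDedekindDomain S] [Free ℤ S]

open Classical in
/-- The norm of the part of the ideal `I` of colour `i`, that is, of the product of the prime
factors of `I`, with multiplicity, to which the colouring `c` assigns the colour `i`. The values of
`c` at ideals which are not prime are irrelevant. -/
noncomputable def colorNorm (c : Ideal S → ι) (I : Ideal S) (i : ι) : ℕ :=
  ∏ P ∈ (normalizedFactors I).toFinset with c P = i, absNorm P ^ (normalizedFactors I).count P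

theorem prod_colorNorm [Fintype ι] (c : Ideal S → ι) {I : Ideal S} (hI : I ≠ ⊥) :
    ∏ i, colorNorm c I i = absNorm I := by
  classical
  calc ∏ i, colorNorm c I i
      = ((normalizedFactors I).map absNorm).prod := by
        rw [Finset.prod_multiset_map_count]
        exact Finset.prod_fiberwise ..
    _ = absNorm I := by
        rw [← map_multiset_prod, Ideal.prod_normalizedFactors_eq_self hI]

variable [Module.Finite ℤ S]

theorem factorization_absNorm_of_isPrime (P : Ideal S) [P.IsPrime] (hP : P ≠ ⊥) :
    (absNorm P).factorization = Finsupp.single (absNorm (P.under ℤ)) (P.inertiaDeg ℤ) := by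
  have : NeZero P := ⟨hP⟩
  rw [← pow_inertiaDeg (absNorm (P.under ℤ)) P, (Nat.absNorm_under_prime P).factorization_pow]

theorem factorization_absNorm_eq_zero_of_under_ne {P Q : Ideal S} [Q.IsPrime] (hQ : Q ≠ ⊥)
    (h : P.under ℤ ≠ Q.under ℤ) : (absNorm Q).factorization (absNorm (P.under ℤ)) = 0 := by
  rw [factorization_absNorm_of_isPrime Q hQ, Finsupp.single_apply_eq_zero]
  refine fun hnorm ↦ absurd ?_ h
  rw [← Int.ideal_span_absNorm_eq_self (P.under ℤ), hnorm, Int.ideal_span_absNorm_eq_self]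

open Classical in
theorem factorization_colorNorm {c : Ideal S → ι} (P : Ideal S) [P.IsPrime] (hP : P ≠ ⊥)
    (hc : ((P.under ℤ).primesOver S).InjOn c) (I : Ideal S) :
    (colorNorm c I (c P)).factorization (absNorm (P.under ℤ)) =
      (normalizedFactors I).count P * P.inertiaDeg ℤ := by
  have hprime {Q : Ideal S} (hQ : Q ∈ {Q ∈ (normalizedFactors I).toFinset | c Q = c P}) :
      Prime Q :=
    prime_of_normalized_factor Q (Multiset.mem_toFinset.1 (Finset.mem_filter.1 hQ).1)
  rw [colorNorm, Nat.factorization_prod_apply fun Q hQ ↦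
    pow_ne_zero _ (absNorm_eq_zero_iff.not.2 (hprime hQ).ne_zero), Finset.sum_eq_single P]
  · rw [Nat.factorization_pow, factorization_absNorm_of_isPrime P hP, Finsupp.smul_apply,
      Finsupp.single_eq_same, smul_eq_mul]
  · intro Q hQ hQP
    have := isPrime_of_prime (hprime hQ)
    have hunder : P.under ℤ ≠ Q.under ℤ := fun h ↦
      hQP (hc ⟨this, ⟨h⟩⟩ ⟨inferInstance, ⟨rfl⟩⟩ (Finset.mem_filter.1 hQ).2)
    rw [Nat.factorization_pow, Finsupp.smul_apply,
      factorization_absNorm_eq_zero_of_under_ne (hprime hQ).ne_zero hunder, smul_zero]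
  · intro hPI
    have hcount : (normalizedFactors I).count P = 0 :=
      Multiset.count_eq_zero.2 fun hmem ↦
        hPI (Finset.mem_filter.2 ⟨Multiset.mem_toFinset.2 hmem, rfl⟩)
    rw [hcount, pow_zero, Nat.factorization_one, Finsupp.zero_apply]

theorem colorNorm_injOn {c : Ideal S → ι}
    (hc : ∀ p : Ideal ℤ, p.IsPrime → (p.primesOver S).InjOn c) :
    Set.InjOn (colorNorm c) {⊥}ᶜ := by
  classical
  intro I hI J hJ h
  have hfactors : normalizedFactors I = normalizedFactors J := by
    ext P
    by_cases hP : P.IsPrime ∧ P ≠ ⊥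
    · have := hP.1
      refine Nat.eq_of_mul_eq_mul_right (inertiaDeg_pos P ℤ) ?_
      rw [← factorization_colorNorm P hP.2 (hc _ inferInstance), h,
        factorization_colorNorm P hP.2 (hc _ inferInstance)]
    · have hcount (L : Ideal S) : (normalizedFactors L).count P = 0 :=
        Multiset.count_eq_zero_of_notMem fun hmem ↦
          have hprime := prime_of_normalized_factor P hmem
          hP ⟨isPrime_of_prime hprime, hprime.ne_zero⟩
      rw [hcount, hcount]
  rw [← Ideal.prod_normalizedFactors_eq_self hI, hfactors,
    Ideal.prod_normalizedFactors_eq_self hJ]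

theorem ncard_absNorm_eq_le_card_finMulAntidiag {n : ℕ} (hn : n ≠ 0) :
    {I : Ideal S | absNorm I = n}.ncard ≤ (Nat.finMulAntidiag (finrank ℤ S) n).card := by
  obtain ⟨c, hc⟩ := exists_injOn_primesOver ℤ S
  have hne {I : Ideal S} (hI : absNorm I = n) : I ≠ ⊥ := by
    rintro rfl
    exact hn (hI.symm.trans absNorm_bot)
  rw [← Set.ncard_coe_finset]
  refine Set.ncard_le_ncard_of_injOn (colorNorm c) (fun I hI ↦ ?_)
    ((colorNorm_injOn hc).mono fun I hI ↦ hne hI)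
  rw [Finset.mem_coe, Nat.mem_finMulAntidiag, prod_colorNorm c (hne hI)]
  exact ⟨hI, hn⟩

end ColorNorm

section ClassNumber

open Ideal Module NumberField InfinitePlace Real

variable (K : Type*) [Field K] [NumberField K]

/-- The Minkowski bound of a number field: every ideal class contains an integral ideal of at most
this norm. Mathlib's `NumberField.mixedEmbedding.minkowskiBound` is instead the volume appearing in
Minkowski's convex body theorem. -/
noncomputable def minkowskiNormBound : ℝ :=
  (4 / π) ^ nrComplexPlaces K *
    ((finrank ℚ K).factorial / finrank ℚ K ^ finrank ℚ K * √|(discr K : ℝ)|)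

theorem classNumber_le_sum_card_finMulAntidiag :
    classNumber K ≤ ∑ n ∈ Finset.Ioc 0 ⌊minkowskiNormBound K⌋₊,
      (Nat.finMulAntidiag (finrank ℚ K) n).card := by
  choose I hI_class hI_norm using exists_ideal_in_class_of_norm_le (K := K)
  have hI_inj : Function.Injective fun C ↦ (I C : Ideal (𝓞 K)) := fun C D h ↦ by
    rw [← hI_class C, ← hI_class D, Subtype.ext h]
  have hmaps : Set.MapsTo (fun C ↦ absNorm (I C : Ideal (𝓞 K)))
      (Finset.univ : Finset (ClassGroup (𝓞 K))) (Finset.Ioc 0 ⌊minkowskiNormBound K⌋₊) :=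
    fun C _ ↦ Finset.mem_coe.2 <| Finset.mem_Ioc.2
      ⟨absNorm_pos_of_nonZeroDivisors (I C), Nat.le_floor (hI_norm C)⟩
  rw [classNumber, ← Finset.card_univ, Finset.card_eq_sum_card_fiberwise hmaps]
  refine Finset.sum_le_sum fun n hn ↦ ?_
  rw [← RingOfIntegers.rank, ← Set.ncard_coe_finset]
  refine (Set.ncard_le_ncard_of_injOn _ ?_ hI_inj.injOn ?_).trans
    (ncard_absNorm_eq_le_card_finMulAntidiag (S := 𝓞 K) (Finset.mem_Ioc.1 hn).1.ne')
  · simp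
  · exact finite_setOfPred_absNorm_eq n

variable {K}

theorem minkowskiNormBound_le_of_finrank_eq_two (hdeg : finrank ℚ K = 2) :
    minkowskiNormBound K ≤ 2 / π * √|(discr K : ℝ)| := by
  have hplaces : nrComplexPlaces K ≤ 1 := by
    have := card_add_two_mul_card_eq_rank K
    lia
  have hbase : 1 ≤ 4 / π := (one_le_div₀ pi_pos).2 pi_le_four
  calc minkowskiNormBound K
      ≤ (4 / π) ^ 1 * ((2).factorial / (2 : ℕ) ^ 2 * √|(discr K : ℝ)|) := by
        rw [minkowskiNormBound, hdeg]
        gcongr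
    _ = 2 / π * √|(discr K : ℝ)| := by
        norm_num [Nat.factorial]
        ring

theorem card_finMulAntidiag_two (n : ℕ) :
    (Nat.finMulAntidiag 2 n).card = ArithmeticFunction.sigma 0 n :=
  calc (Nat.finMulAntidiag 2 n).card
      = n.divisorsAntidiagonal.card := by
        rw [← Nat.image_piFinTwoEquiv_finMulAntidiag,
          Finset.card_image_of_injective _ (Equiv.injective _)]
    _ = n.divisors.card := by rw [← Nat.map_div_right_divisors, Finset.card_map]
    _ = ArithmeticFunction.sigma 0 n := (ArithmeticFunction.sigma_zero_apply n).symm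

theorem classNumber_le_sum_div_of_finrank_eq_two (hdeg : finrank ℚ K = 2) :
    classNumber K ≤ ∑ a ∈ Finset.Ioc 0 ⌊2 / π * √|(discr K : ℝ)|⌋₊,
      ⌊2 / π * √|(discr K : ℝ)|⌋₊ / a :=
  calc classNumber K
      ≤ ∑ n ∈ Finset.Ioc 0 ⌊minkowskiNormBound K⌋₊,
          (Nat.finMulAntidiag (finrank ℚ K) n).card :=
        classNumber_le_sum_card_finMulAntidiag K
    _ ≤ ∑ n ∈ Finset.Ioc 0 ⌊2 / π * √|(discr K : ℝ)|⌋₊, ArithmeticFunction.sigma 0 n := by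
        rw [hdeg]
        simp only [card_finMulAntidiag_two]
        gcongr
        exact minkowskiNormBound_le_of_finrank_eq_two hdeg
    _ = _ := ArithmeticFunction.sum_Ioc_sigma0_eq_sum_div _

end ClassNumber

section DivisorSum

open Real

theorem sum_floor_div_le_mul_one_add_log {x : ℝ} (hx : 1 ≤ x) :
    ((∑ a ∈ Finset.Ioc 0 ⌊x⌋₊, ⌊x⌋₊ / a : ℕ) : ℝ) ≤ x * (1 + log x) :=
  calc ((∑ a ∈ Finset.Ioc 0 ⌊x⌋₊, ⌊x⌋₊ / a : ℕ) : ℝ)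
      ≤ ∑ a ∈ Finset.Ioc 0 ⌊x⌋₊, ⌊x⌋₊ * (a : ℝ)⁻¹ := by
        rw [Nat.cast_sum]
        exact Finset.sum_le_sum fun a _ ↦ Nat.cast_div_le
    _ = ⌊x⌋₊ * harmonic ⌊x⌋₊ := by
        rw [harmonic_eq_sum_Icc, ← Finset.mul_sum]
        push_cast
        rfl
    _ ≤ ⌊x⌋₊ * (1 + log x) := by
        gcongr
        exact harmonic_floor_le_one_add_log x hx
    _ ≤ x * (1 + log x) := by
        have := log_nonneg hx
        gcongr
        exact Nat.floor_le (by positivity)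

theorem log_pi_gt_d2 : 1.14 < log π := by
  have hlog : log π = log 3 + log (π / 3) := by
    rw [log_div pi_ne_zero (by norm_num), add_sub_cancel]
  have htangent : 1 - (π / 3)⁻¹ ≤ log (π / 3) := one_sub_inv_le_log_of_pos (by positivity)
  have hinv : (π / 3)⁻¹ < 0.955 := by
    rw [inv_div, div_lt_iff₀ pi_pos]
    linarith [pi_gt_d4]
  linarith [log_three_gt_d9]

theorem one_add_log_le_exp_one_div_two_mul_log {x : ℝ} (hx : 3 ≤ x) :
    1 + log x ≤ exp 1 / 2 * log (π / 2 * x) := by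
  have hlog : log (π / 2 * x) = log π - log 2 + log x := by
    rw [log_mul (by positivity) (by positivity), log_div pi_ne_zero two_ne_zero]
  have hlogx : 1.098 ≤ log x :=
    (log_three_gt_d9.le.trans' (by norm_num)).trans (log_le_log (by norm_num) hx)
  have hlogπ : 0.446 ≤ log π - log 2 := by linarith [log_pi_gt_d2, log_two_lt_d9]
  have he : 1.359 ≤ exp 1 / 2 := by linarith [exp_one_gt_d9]
  rw [hlog]
  nlinarith

theorem sum_floor_div_le_exp_one_div_pi_mul {s : ℝ} (hs : 2 ≤ s) :
    ((∑ a ∈ Finset.Ioc 0 ⌊2 / π * s⌋₊, ⌊2 / π * s⌋₊ / a : ℕ) : ℝ) ≤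
      exp 1 / π * (s * log s) := by
  set x := 2 / π * s with hxs
  have hsx : π / 2 * x = s := by rw [hxs]; field_simp
  have hx : 1 ≤ x := by
    rw [hxs, div_mul_eq_mul_div, one_le_div₀ pi_pos]
    linarith [pi_le_four]
  have hmono {t : ℝ} (ht : 1 ≤ t) (hts : t ≤ s) :
      exp 1 / π * (t * log t) ≤ exp 1 / π * (s * log s) := by
    gcongr ?_ * ?_
    have he : exp (-1) ≤ 1 := exp_le_one_iff.2 (by norm_num)
    exact mul_log_strictMonoOn.monotoneOn (he.trans ht) (he.trans (ht.trans hts)) hts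
  obtain hN | hN | hN : ⌊x⌋₊ = 1 ∨ ⌊x⌋₊ = 2 ∨ 3 ≤ ⌊x⌋₊ := by
    have : 1 ≤ ⌊x⌋₊ := (Nat.one_le_floor_iff x).2 hx
    lia
  · calc ((∑ a ∈ Finset.Ioc 0 ⌊x⌋₊, ⌊x⌋₊ / a : ℕ) : ℝ) = 1 := by simp [hN]
      _ ≤ exp 1 / π * (2 * log 2) := by
        rw [div_mul_eq_mul_div, one_le_div₀ pi_pos]
        nlinarith [log_two_gt_d9, exp_one_gt_d9, pi_lt_d2]
      _ ≤ exp 1 / π * (s * log s) := hmono one_le_two hs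
  · have hx2 : 2 ≤ x := by exact_mod_cast (Nat.le_floor_iff (by positivity)).1 hN.ge
    calc ((∑ a ∈ Finset.Ioc 0 ⌊x⌋₊, ⌊x⌋₊ / a : ℕ) : ℝ) = 3 := by rw [hN]; norm_cast
      _ ≤ exp 1 * log π := by nlinarith [log_pi_gt_d2, exp_one_gt_d9]
      _ = exp 1 / π * (π * log π) := by field_simp
      _ ≤ exp 1 / π * (s * log s) :=
        hmono (by linarith [pi_gt_three]) (by nlinarith [pi_pos])
  · have hx3 : 3 ≤ x := by exact_mod_cast (Nat.le_floor_iff (by positivity)).1 hN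
    calc ((∑ a ∈ Finset.Ioc 0 ⌊x⌋₊, ⌊x⌋₊ / a : ℕ) : ℝ)
        ≤ x * (1 + log x) := sum_floor_div_le_mul_one_add_log hx
      _ ≤ x * (exp 1 / 2 * log (π / 2 * x)) := by
        gcongr
        exact one_add_log_le_exp_one_div_two_mul_log hx3
      _ = exp 1 / π * (s * log s) := by rw [hsx, hxs]; ring

end DivisorSum

theorem classNumber_le_of_imaginary_quadratic_general (K : Type*) [Field K] [NumberField K]
    (hdeg : Module.finrank ℚ K = 2) (hdisc : 4 ≤ |NumberField.discr K|) :
    (NumberField.classNumber K : ℝ) ≤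
      Real.exp 1 / (2 * Real.pi) * Real.sqrt |(NumberField.discr K : ℝ)| *
        Real.log |(NumberField.discr K : ℝ)| := by
  have hsqrt : 2 ≤ √|(NumberField.discr K : ℝ)| :=
    Real.le_sqrt_of_sq_le (by norm_num; exact_mod_cast hdisc)
  calc (NumberField.classNumber K : ℝ)
      ≤ Real.exp 1 / Real.pi *
          (√|(NumberField.discr K : ℝ)| * Real.log √|(NumberField.discr K : ℝ)|) :=
        (Nat.cast_le.2 (classNumber_le_sum_div_of_finrank_eq_two hdeg)).trans
          (sum_floor_div_le_exp_one_div_pi_mul hsqrt)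
    _ = _ := by
        rw [Real.log_sqrt (abs_nonneg _)]
        ring

/-- For `K` an imaginary quadratic field, i.e. a number field with
`[K : ℚ] = 2` and discriminant `d < -4`, the class number of `K` satisfies
`h_K ≤ (e/(2π)) √|d| log|d|`. -/
theorem classNumber_le_of_imaginary_quadratic (K : Type*) [Field K] [NumberField K]
    (hdeg : Module.finrank ℚ K = 2) (hdisc : NumberField.discr K < -4) :
    (NumberField.classNumber K : ℝ) ≤
      Real.exp 1 / (2 * Real.pi) * Real.sqrt |(NumberField.discr K : ℝ)| *
        Real.log |(NumberField.discr K : ℝ)| :=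
  classNumber_le_of_imaginary_quadratic_general K hdeg (le_abs.2 (.inr (by lia)))
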